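/- Let C be an A-component of G_∞(H), and define C_{+1} (respectively C_{-1}) as the set of all X ∈ G_∞(H) containing some element of C as a hyperplane (respectively, which are a hyperplane in some element of C). Then X ∈ G_∞(H) belongs to C_{+1} if and only if the top G^1(X) is contained in C, and X belongs to C_{-1} if and only if the star S(X) is contained in C. -/

import Mathlib

open Module Submodule Classical

variable {H : Type*} [NormedAddCommGroup H] [InnerProductSpace ℂ H] [CompleteSpace H]

/-- The orthogonal projection of `H` onto a closed subspace `K`, as a map `H →L[ℂ] H`
(defined to be `0` if `K` is not closed). -/
noncomputable def projCLM (K : Submodule ℂ H) : H →L[ℂ] H :=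
  if h : IsClosed (K : Set H) then
    haveI : CompleteSpace K := h.completeSpace_coe
    K.subtypeL.comp (orthogonalProjection K)
  else 0

/-- Two (closed) subspaces are compatible if their orthogonal projections commute. -/
def Compatible (K L : Submodule ℂ H) : Prop := Commute (projCLM K) (projCLM L)

/-- `W` is a subspace of `X` of finite codimension `n` in `X`. -/
def CodimIn (W X : Submodule ℂ H) (n : ℕ) : Prop :=
  W ≤ X ∧ FiniteDimensional ℂ (↥X ⧸ W.comap X.subtype) ∧
    finrank ℂ (↥X ⧸ W.comap X.subtype) = n

/-- `X` and `Y` are adjacent: `X ∩ Y` is a hyperplane in both `X` and `Y`. -/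
def Adjacent (X Y : Submodule ℂ H) : Prop :=
  CodimIn (X ⊓ Y) X 1 ∧ CodimIn (X ⊓ Y) Y 1

/-- `X` and `Y` are ortho-adjacent: adjacent and compatible. -/
def OrthoAdjacent (X Y : Submodule ℂ H) : Prop := Adjacent X Y ∧ Compatible X Y

/-- The Grassmannian `G_∞(H)` of closed subspaces of `H` whose dimension and
codimension both are infinite. -/
def Ginf : Set (Submodule ℂ H) :=
  {X | IsClosed (X : Set H) ∧ ¬FiniteDimensional ℂ X ∧ ¬FiniteDimensional ℂ Xᗮ}

/-- `X ∩ Y` has the same finite codimension in both `X` and `Y`. -/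
def SameFinCodim (X Y : Submodule ℂ H) : Prop :=
  ∃ n : ℕ, CodimIn (X ⊓ Y) X n ∧ CodimIn (X ⊓ Y) Y n

/-- An `A`-component of `G_∞(H)`: a set of elements pairwise at the same finite
codimension, maximal with respect to this property. -/
def IsAComponent (C : Set (Submodule ℂ H)) : Prop :=
  C ⊆ Ginf ∧ (∀ X ∈ C, ∀ Y ∈ C, SameFinCodim X Y) ∧
    ∀ D : Set (Submodule ℂ H), D ⊆ Ginf → (∀ X ∈ D, ∀ Y ∈ D, SameFinCodim X Y) →
      C ⊆ D → D = C

/-- The star `S(X)`: all closed subspaces of `H` containing `X` as a hyperplane. -/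
def starSet (X : Submodule ℂ H) : Set (Submodule ℂ H) :=
  {Y | IsClosed (Y : Set H) ∧ CodimIn X Y 1}

/-- The top `G¹(X)`: all closed hyperplanes of `X`. -/
def topSet (X : Submodule ℂ H) : Set (Submodule ℂ H) :=
  {M | IsClosed (M : Set H) ∧ CodimIn M X 1}

/-- The image `U(M)` of a subspace `M ⊆ X` under a linear isometry `U : X ≃ X'`,
viewed as a subspace of `H`. -/
def imL (X X' : Submodule ℂ H) (U : ↥X ≃ₗᵢ[ℂ] ↥X') (M : Submodule ℂ H) : Submodule ℂ H :=
  Submodule.map X'.subtype (Submodule.map U.toLinearEquiv.toLinearMap (M.comap X.subtype))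

/-- The image `U(M)` of a subspace `M ⊆ X` under a conjugate-linear isometry `U : X ≃ X'`,
viewed as a subspace of `H`. -/
def imC (X X' : Submodule ℂ H) (U : ↥X ≃ₗᵢ⋆[ℂ] ↥X') (M : Submodule ℂ H) : Submodule ℂ H :=
  Submodule.map X'.subtype (Submodule.map U.toLinearEquiv.toLinearMap (M.comap X.subtype))

/-- The Grassmannian `G_k(H)` of `k`-dimensional subspaces of `H`. -/
def Gk (k : ℕ) : Set (Submodule ℂ H) :=
  {X | FiniteDimensional ℂ X ∧ finrank ℂ X = k}

/-- The Grassmannian `G^k(H)` of closed subspaces of `H` of codimension `k`. -/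
def GCk (k : ℕ) : Set (Submodule ℂ H) :=
  {X | IsClosed (X : Set H) ∧ FiniteDimensional ℂ (H ⧸ X) ∧ finrank ℂ (H ⧸ X) = k}


/-!
For submodules `W`, `X` let `relLength W X` be the length of `X ⧸ (X ⊓ W)`. It satisfies
`relLength W (X ⊓ Y) + relLength X Y = relLength (W ⊓ X) Y`, and cancelling in `ℕ∞` shows that
`relLength X Y = relLength Y X ≠ ⊤` defines an equivalence relation. On complex subspaces it is
`SameFinCodim`, and closed subspaces related to a member of `Ginf` are again in `Ginf`, so by
maximality an `A`-component is a full class of closed subspaces. All hyperplanes of `X` lie in one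
class, and so do all subspaces containing `X` as a hyperplane; hence one closed such subspace is in
`C` iff all of them are.
-/

section RelLength

variable {R M : Type*} [Ring R] [AddCommGroup M] [Module R M] {W X Y Z : Submodule R M}

theorem mapQ_injective_of_comap_le {N : Type*} [AddCommGroup N] [Module R N] {P : Submodule R M}
    {Q : Submodule R N} (f : M →ₗ[R] N) (h : P ≤ Q.comap f) (h' : Q.comap f ≤ P) :
    Function.Injective (P.mapQ Q f h) :=
  LinearMap.ker_eq_bot.1 <| by rw [ker_mapQ, ← le_antisymm h h', mkQ_map_self]

theorem inf_submoduleOf_right (W X : Submodule R M) :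
    (W ⊓ X).submoduleOf X = W.submoduleOf X := by
  rw [submoduleOf, comap_inf, comap_subtype_self, inf_top_eq, submoduleOf]

/-- The length of `X ⧸ (X ⊓ W)`, the module analogue of `Subgroup.relIndex`; over a field it is
the codimension of `X ⊓ W` in `X`. As there, `W` need not be contained in `X`. -/
noncomputable def relLength (W X : Submodule R M) : ℕ∞ :=
  Module.length R (X ⧸ W.submoduleOf X)

theorem relLength_inf_right (W X : Submodule R M) : relLength (W ⊓ X) X = relLength W X := by
  rw [relLength, inf_submoduleOf_right, relLength]

theorem relLength_inf_left (W X : Submodule R M) : relLength (X ⊓ W) X = relLength W X := by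
  rw [inf_comm, relLength_inf_right]

theorem relLength_self (X : Submodule R M) : relLength X X = 0 := by
  rw [relLength, submoduleOf_self]
  exact Module.length_eq_zero

theorem relLength_eq_length_of_disjoint (h : Disjoint W X) :
    relLength W X = Module.length R X :=
  (quotEquivOfEqBot _ (disjoint_iff_comap_eq_bot.1 h.symm)).length_eq

theorem relLength_mono_right (W : Submodule R M) (h : X ≤ Y) : relLength W X ≤ relLength W Y :=
  Module.length_le_of_injective _ <|
    mapQ_injective_of_comap_le (P := W.submoduleOf X) (Q := W.submoduleOf Y) (inclusion h)
      (fun _ hx ↦ hx) fun _ hx ↦ hx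

theorem relLength_inf_add_relLength (W X Y : Submodule R M) :
    relLength W (X ⊓ Y) + relLength X Y = relLength (W ⊓ X) Y := by
  let f : (↥(X ⊓ Y) ⧸ W.submoduleOf (X ⊓ Y)) →ₗ[R] (Y ⧸ (W ⊓ X).submoduleOf Y) :=
    mapQ _ _ (inclusion inf_le_right) fun x hx ↦ ⟨hx, x.2.1⟩
  let g : (Y ⧸ (W ⊓ X).submoduleOf Y) →ₗ[R] (Y ⧸ X.submoduleOf Y) :=
    factor (comap_mono inf_le_right)
  have f_injective : Function.Injective f :=
    mapQ_injective_of_comap_le _ _ fun _ hx ↦ hx.1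
  have exact_f_g : Function.Exact f g := by
    have ker_g : g.ker = (X.submoduleOf Y).map (mkQ _) := ker_mapQ _ _ _ _
    have range_f : f.range = ((X ⊓ Y).submoduleOf Y).map (mkQ _) :=
      (range_mapQ _ _ _ _).trans (congrArg _ (range_inclusion _ _ _))
    rw [LinearMap.exact_iff, ker_g, range_f, inf_submoduleOf_right]
  exact (Module.length_eq_add_of_exact f g f_injective (factor_surjective _) exact_f_g).symm

theorem relLength_eq_one_iff_covBy (h : W ≤ X) : relLength W X = 1 ↔ W ⋖ X := by
  rw [relLength, Module.length_eq_one_iff, covBy_iff_quot_is_simple h, submoduleOf]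

/-- `X ⊓ Y` has the same finite colength in `X` and in `Y`: the analogue of `SameFinCodim` for
submodules of an arbitrary module. -/
def EquiCommensurable (X Y : Submodule R M) : Prop :=
  relLength X Y = relLength Y X ∧ relLength X Y ≠ ⊤

namespace EquiCommensurable

theorem refl (X : Submodule R M) : EquiCommensurable X X :=
  ⟨rfl, by simp [relLength_self]⟩

theorem symm (h : EquiCommensurable X Y) : EquiCommensurable Y X :=
  ⟨h.1.symm, h.1 ▸ h.2⟩

theorem of_relLength_lower_eq (hX : W ≤ X) (hY : W ≤ Y) (h : relLength W X = relLength W Y)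
    (hfin : relLength W X ≠ ⊤) : EquiCommensurable X Y := by
  have split_X : relLength W (Y ⊓ X) + relLength Y X = relLength W X := by
    rw [relLength_inf_add_relLength, inf_eq_left.2 hY]
  have split_Y : relLength W (Y ⊓ X) + relLength X Y = relLength W Y := by
    rw [inf_comm, relLength_inf_add_relLength, inf_eq_left.2 hX]
  have hW : relLength W (Y ⊓ X) ≠ ⊤ :=
    ne_top_of_le_ne_top hfin (relLength_mono_right W inf_le_right)
  have hXY : relLength X Y = relLength Y X :=
    ENat.add_right_injective_of_ne_top hW (by simp only [split_X, split_Y, h])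
  exact ⟨hXY, hXY ▸ ne_top_of_le_ne_top hfin (split_X ▸ le_add_self)⟩

theorem of_relLength_upper_eq (hX : X ≤ Z) (hY : Y ≤ Z) (h : relLength X Z = relLength Y Z)
    (hfin : relLength X Z ≠ ⊤) : EquiCommensurable X Y := by
  have split : relLength X Y + relLength X Z = relLength Y X + relLength X Z :=
    calc relLength X Y + relLength X Z = relLength X (Y ⊓ Z) + relLength Y Z := by
          rw [inf_eq_left.2 hY, h]
      _ = relLength Y (X ⊓ Z) + relLength X Z := by
          rw [relLength_inf_add_relLength, relLength_inf_add_relLength, inf_comm]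
      _ = relLength Y X + relLength X Z := by rw [inf_eq_left.2 hX]
  exact ⟨ENat.add_left_injective_of_ne_top hfin split,
    ne_top_of_le_ne_top hfin (relLength_mono_right X hY)⟩

theorem trans (hXY : EquiCommensurable X Y) (hYZ : EquiCommensurable Y Z) :
    EquiCommensurable X Z := by
  have eq_X_Y : relLength (Z ⊓ Y) X = relLength (Z ⊓ X) Y := by
    rw [← relLength_inf_add_relLength, ← relLength_inf_add_relLength, hXY.1, inf_comm]
  have eq_Y_Z : relLength (X ⊓ Z) Y = relLength (X ⊓ Y) Z := by
    rw [← relLength_inf_add_relLength, ← relLength_inf_add_relLength, hYZ.1, inf_comm]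
  have hfin : relLength (Z ⊓ Y) X ≠ ⊤ := by
    rw [← relLength_inf_add_relLength, Ne, ENat.add_eq_top, not_or]
    exact ⟨ne_top_of_le_ne_top (hYZ.1 ▸ hYZ.2) (relLength_mono_right Z inf_le_left),
      hXY.1 ▸ hXY.2⟩
  have eq_X_Z : relLength (Z ⊓ Y ⊓ X) X = relLength (Z ⊓ Y ⊓ X) Z :=
    calc relLength (Z ⊓ Y ⊓ X) X = relLength (Z ⊓ Y) X := relLength_inf_right _ _
      _ = relLength (X ⊓ Y) Z := by rw [eq_X_Y, inf_comm Z, eq_Y_Z]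
      _ = relLength (Z ⊓ Y ⊓ X) Z := by rw [← relLength_inf_left, inf_comm X, inf_assoc]
  refine of_relLength_lower_eq inf_le_right (inf_le_left.trans inf_le_left) eq_X_Z ?_
  rwa [relLength_inf_right]

end EquiCommensurable

end RelLength

section DivisionRing

variable {K V : Type*} [DivisionRing K] [AddCommGroup V] [Module K V] {W X : Submodule K V}

theorem length_ne_top_iff_finite : Module.length K V ≠ ⊤ ↔ Module.Finite K V := by
  rw [Module.length_ne_top_iff, isFiniteLength_iff_isNoetherian_isArtinian]
  exact ⟨fun h ↦ have := h.1; inferInstance, fun _ ↦ ⟨inferInstance, inferInstance⟩⟩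

theorem length_eq_natCast_iff {n : ℕ} :
    Module.length K V = n ↔ Module.Finite K V ∧ finrank K V = n := by
  refine ⟨fun h ↦ ?_, fun ⟨_, h⟩ ↦ by rw [Module.length_eq_finrank, h]⟩
  have : Module.Finite K V := length_ne_top_iff_finite.1 (h ▸ ENat.natCast_ne_top n)
  exact ⟨this, by rwa [Module.length_eq_finrank, Nat.cast_inj] at h⟩

theorem finite_of_relLength_ne_top [Module.Finite K W] (h : relLength W X ≠ ⊤) :
    Module.Finite K X := by
  have split : relLength ⊥ (W ⊓ X) + relLength W X = Module.length K X := by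
    rw [relLength_inf_add_relLength, bot_inf_eq, relLength_eq_length_of_disjoint disjoint_bot_left]
  rw [← length_ne_top_iff_finite, ← split, Ne, ENat.add_eq_top, not_or,
    relLength_eq_length_of_disjoint disjoint_bot_left]
  exact ⟨Module.length_ne_top, h⟩

end DivisionRing

section InnerProductSpace

variable {𝕜 E : Type*} [RCLike 𝕜] [NormedAddCommGroup E] [InnerProductSpace 𝕜 E]
  {X Y : Submodule 𝕜 E}

theorem finiteDimensional_inf_orthogonal (h : relLength X Y ≠ ⊤) :
    FiniteDimensional 𝕜 ↥(Y ⊓ Xᗮ) := by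
  have disj : Disjoint X (Y ⊓ Xᗮ) := X.orthogonal_disjoint.mono_right inf_le_right
  rw [FiniteDimensional, ← length_ne_top_iff_finite, ← relLength_eq_length_of_disjoint disj]
  exact ne_top_of_le_ne_top h (relLength_mono_right X inf_le_left)

theorem finiteDimensional_orthogonal_of_relLength_ne_top [Y.HasOrthogonalProjection]
    [FiniteDimensional 𝕜 Yᗮ] (h : relLength X Y ≠ ⊤) : FiniteDimensional 𝕜 Xᗮ := by
  have : FiniteDimensional 𝕜 ↥(Y ⊓ (X ⊓ Y)ᗮ) :=
    finiteDimensional_inf_orthogonal (by rwa [relLength_inf_right])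
  have decomp : Yᗮ ⊔ Y ⊓ (X ⊓ Y)ᗮ = (X ⊓ Y)ᗮ := by
    simpa using sup_orthogonal_inf_of_hasOrthogonalProjection
      (orthogonal_le (inf_le_right : X ⊓ Y ≤ Y))
  exact finiteDimensional_of_le
    ((orthogonal_le (inf_le_left : X ⊓ Y ≤ X)).trans decomp.ge)

theorem inf_orthogonal_span_singleton_covBy {x : E} (hx : x ∈ X) (hx0 : x ≠ 0) :
    (𝕜 ∙ x)ᗮ ⊓ X ⋖ X := by
  have hx_notMem : x ∉ (𝕜 ∙ x)ᗮ ⊓ X := fun h ↦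
    hx0 (inner_self_eq_zero.1 (mem_orthogonal_singleton_iff_inner_right.1 h.1))
  simpa only [sup_orthogonal_inf_of_hasOrthogonalProjection
    ((span_singleton_le_iff_mem x X).2 hx)] using covBy_span_singleton_sup hx_notMem

end InnerProductSpace

section Hyperplanes

variable {E : Type*} [NormedAddCommGroup E] [InnerProductSpace ℂ E] {W X Y Z : Submodule ℂ E}

theorem codimIn_iff_relLength {n : ℕ} : CodimIn W X n ↔ W ≤ X ∧ relLength W X = n :=
  and_congr_right fun _ ↦ length_eq_natCast_iff.symm

theorem codimIn_one_iff_covBy : CodimIn W X 1 ↔ W ⋖ X := by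
  rw [codimIn_iff_relLength, Nat.cast_one]
  exact ⟨fun h ↦ (relLength_eq_one_iff_covBy h.1).1 h.2,
    fun h ↦ ⟨h.le, (relLength_eq_one_iff_covBy h.le).2 h⟩⟩

theorem sameFinCodim_iff_equiCommensurable : SameFinCodim X Y ↔ EquiCommensurable X Y := by
  simp only [SameFinCodim, codimIn_iff_relLength, inf_le_left, inf_le_right, true_and,
    relLength_inf_left, relLength_inf_right, EquiCommensurable, ENat.ne_top_iff_exists]
  exact ⟨fun ⟨n, hYX, hXY⟩ ↦ ⟨hXY.trans hYX.symm, n, hXY.symm⟩,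
    fun ⟨h, n, hn⟩ ↦ ⟨n, h.symm.trans hn.symm, hn.symm⟩⟩

theorem sameFinCodim_of_codimIn_lower {n : ℕ} (hX : CodimIn W X n) (hY : CodimIn W Y n) :
    SameFinCodim X Y := by
  rw [codimIn_iff_relLength] at hX hY
  exact sameFinCodim_iff_equiCommensurable.2 <|
    .of_relLength_lower_eq hX.1 hY.1 (hX.2.trans hY.2.symm) (hX.2 ▸ ENat.natCast_ne_top n)

theorem sameFinCodim_of_codimIn_upper {n : ℕ} (hX : CodimIn X Z n) (hY : CodimIn Y Z n) :
    SameFinCodim X Y := by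
  rw [codimIn_iff_relLength] at hX hY
  exact sameFinCodim_iff_equiCommensurable.2 <|
    .of_relLength_upper_eq hX.1 hY.1 (hX.2.trans hY.2.symm) (hX.2 ▸ ENat.natCast_ne_top n)

theorem topSet_nonempty (hX : IsClosed (X : Set E)) (hbot : X ≠ ⊥) :
    (topSet X).Nonempty := by
  obtain ⟨x, hx, hx0⟩ := exists_mem_ne_zero_of_ne_bot hbot
  exact ⟨(ℂ ∙ x)ᗮ ⊓ X, (isClosed_orthogonal _).inter hX,
    codimIn_one_iff_covBy.2 (inf_orthogonal_span_singleton_covBy hx hx0)⟩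

theorem starSet_nonempty (hX : IsClosed (X : Set E)) (htop : X ≠ ⊤) :
    (starSet X).Nonempty := by
  obtain ⟨z, -, hz⟩ := SetLike.exists_of_lt htop.lt_top
  refine ⟨(ℂ ∙ z) ⊔ X, ?_, codimIn_one_iff_covBy.2 (covBy_span_singleton_sup hz)⟩
  exact sup_comm X (ℂ ∙ z) ▸ isClosed_sup_finiteDimensional X (ℂ ∙ z) hX

theorem ne_bot_of_mem_Ginf (hX : X ∈ Ginf) : X ≠ ⊥ := by
  rintro rfl
  exact hX.2.1 inferInstance

theorem ne_top_of_mem_Ginf (hX : X ∈ Ginf) : X ≠ ⊤ := by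
  rintro rfl
  exact hX.2.2 (by rw [top_orthogonal_eq_bot]; infer_instance)

end Hyperplanes

theorem mem_Ginf_of_sameFinCodim {X Y : Submodule ℂ H} (hX : X ∈ Ginf)
    (hY : IsClosed (Y : Set H)) (h : SameFinCodim X Y) : Y ∈ Ginf := by
  obtain ⟨eq, hXY⟩ := sameFinCodim_iff_equiCommensurable.1 h
  have : CompleteSpace Y := hY.completeSpace_coe
  exact ⟨hY, fun _ ↦ hX.2.1 (finite_of_relLength_ne_top (eq ▸ hXY)),
    fun _ ↦ hX.2.2 (finiteDimensional_orthogonal_of_relLength_ne_top hXY)⟩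

theorem IsAComponent.mem_of_sameFinCodim {C : Set (Submodule ℂ H)} (hC : IsAComponent C)
    {X Y : Submodule ℂ H} (hX : X ∈ C) (hY : IsClosed (Y : Set H)) (h : SameFinCodim X Y) :
    Y ∈ C := by
  obtain ⟨C_subset, C_pairwise, C_maximal⟩ := hC
  simp only [sameFinCodim_iff_equiCommensurable] at C_pairwise C_maximal
  have hYC : ∀ Z ∈ C, EquiCommensurable Y Z := fun Z hZ ↦
    (sameFinCodim_iff_equiCommensurable.1 h).symm.trans (C_pairwise X hX Z hZ)
  have insert_eq : insert Y C = C := by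
    refine C_maximal _ (Set.insert_subset (mem_Ginf_of_sameFinCodim (C_subset hX) hY h) C_subset)
      ?_ (Set.subset_insert Y C)
    rintro A (rfl | hA) B (rfl | hB)
    · exact EquiCommensurable.refl _
    · exact hYC B hB
    · exact (hYC A hA).symm
    · exact C_pairwise A hA B hB
  exact insert_eq ▸ Set.mem_insert Y C

theorem stmt10_general {C : Set (Submodule ℂ H)} (hC : IsAComponent C) {X : Submodule ℂ H}
    (hX : IsClosed (X : Set H)) (hbot : X ≠ ⊥) (htop : X ≠ ⊤) :
    ((∃ Y ∈ C, CodimIn Y X 1) ↔ topSet X ⊆ C) ∧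
    ((∃ Y ∈ C, CodimIn X Y 1) ↔ starSet X ⊆ C) := by
  constructor
  · constructor
    · rintro ⟨Y, hY, hYX⟩ M ⟨hM, hMX⟩
      exact hC.mem_of_sameFinCodim hY hM (sameFinCodim_of_codimIn_upper hYX hMX)
    · intro h
      obtain ⟨M, hM⟩ := topSet_nonempty hX hbot
      exact ⟨M, h hM, hM.2⟩
  · constructor
    · rintro ⟨Y, hY, hXY⟩ Z ⟨hZ, hXZ⟩
      exact hC.mem_of_sameFinCodim hY hZ (sameFinCodim_of_codimIn_lower hXY hXZ)
    · intro h
      obtain ⟨Z, hZ⟩ := starSet_nonempty hX htop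
      exact ⟨Z, h hZ, hZ.2⟩

/-- for an `A`-component `C` of `G_∞(H)` and `X ∈ G_∞(H)`, `X` belongs to `C₊₁`
iff the top `G¹(X)` is contained in `C`, and `X` belongs to `C₋₁` iff the star `S(X)` is
contained in `C`. -/
theorem stmt10 (hH : ¬FiniteDimensional ℂ H)
    (C : Set (Submodule ℂ H)) (hC : IsAComponent C)
    (X : Submodule ℂ H) (hX : X ∈ Ginf (H := H)) :
    ((∃ Y ∈ C, CodimIn Y X 1) ↔ topSet X ⊆ C) ∧
    ((∃ Y ∈ C, CodimIn X Y 1) ↔ starSet X ⊆ C) := by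
  exact stmt10_general hC hX.1 (ne_bot_of_mem_Ginf hX) (ne_top_of_mem_Ginf hX)
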